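/- arXiv:1403.6581 — 3 statements merged into one kernel-verified Lean document; each statement's English description precedes it below -/
import Mathlib

section
/- Assume d + α ≠ 3. There exists a constant c > 0, depending only on d and α, such that for all λ with 0 < λ < α < λ+1 and all t ∈ [-1,1): u_λ(t) - u_0(t) ≥ 1/(α-λ) - c. Moreover, for every δ ∈ (0,1) there exists a constant C > 0, depending only on d, α and δ, such that for all such λ and t: u_λ(t) - u_0(t) ≤ 1/(α-λ) + C/(α-λ)^{1-δ} + C·max(1, (1-t)^{-(d+α-3)/2})/(α-λ)^δ. -/
open MeasureTheory Metric Real Set Filter RealInnerProductSpace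
open scoped ENNReal

noncomputable section

/-- Euclidean space ℝ^d. -/
abbrev Ed (d : ℕ) := EuclideanSpace ℝ (Fin d)

/-- The constant `A_{d,α}`. -/
noncomputable def fracConst (d : ℕ) (α : ℝ) : ℝ :=
  α * 2 ^ (α - 1) * π ^ (-(d : ℝ) / 2) * Real.Gamma (((d : ℝ) + α) / 2) / Real.Gamma (1 - α / 2)

/-- The fractional Laplacian `Δ^{α/2} Φ (x)` exists and equals `L`. -/
def fracLapAt (d : ℕ) (α : ℝ) (Φ : Ed d → ℝ) (x : Ed d) (L : ℝ) : Prop :=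
  Filter.Tendsto
    (fun ε : ℝ => fracConst d α *
      ∫ y in {y : Ed d | ε < ‖y - x‖}, (Φ y - Φ x) * ‖y - x‖ ^ (-(d : ℝ) - α))
    (nhdsWithin 0 (Set.Ioi 0)) (nhds L)

/-- The last coordinate of a vector in ℝ^d. -/
def lastCoord (d : ℕ) (x : Ed d) : ℝ :=
  if h : 0 < d then x ⟨d - 1, Nat.sub_lt h Nat.one_pos⟩ else 0

/-- The unit vector `e_d = (0,…,0,1)`. -/
def eLast (d : ℕ) : Ed d :=
  if h : 0 < d then EuclideanSpace.single ⟨d - 1, Nat.sub_lt h Nat.one_pos⟩ (1 : ℝ) else 0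

/-- The right circular cone `Γ_Θ` of angle `Θ`. -/
def cone (d : ℕ) (Θ : ℝ) : Set (Ed d) := {x | ‖x‖ * Real.cos Θ < lastCoord d x}

/-- The unit sphere `S^{d-1}` in ℝ^d. -/
def unitSphere (d : ℕ) : Set (Ed d) := Metric.sphere (0 : Ed d) 1

/-- The spherical cap `B_Θ`. -/
def capB (d : ℕ) (Θ : ℝ) : Set (Ed d) := {θ | θ ∈ unitSphere d ∧ Real.cos Θ < lastCoord d θ}

/-- The surface measure `σ`: the (d-1)-dimensional Hausdorff measure. -/
noncomputable def sphMeasure (d : ℕ) : Measure (Ed d) := μH[(d : ℝ) - 1]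

/-- The kernel `u_λ(t)`. -/
noncomputable def uKernel (d : ℕ) (α lam t : ℝ) : ℝ :=
  ∫ r in Set.Ioi (0 : ℝ), r ^ ((d : ℝ) + lam - 1) * (r ^ 2 - 2 * r * t + 1) ^ (-((d : ℝ) + α) / 2)

/-- The kernel `u_λ(t)` as a value in `[0,∞]`. -/
noncomputable def uKernelE (d : ℕ) (α lam t : ℝ) : ℝ≥0∞ :=
  ∫⁻ r in Set.Ioi (0 : ℝ),
    ENNReal.ofReal (r ^ ((d : ℝ) + lam - 1) * (r ^ 2 - 2 * r * t + 1) ^ (-((d : ℝ) + α) / 2))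

/-- The spherical fractional Laplacian `Δ_S^{α/2} φ (η)` exists and equals `L`. -/
def sphFracLapAt (d : ℕ) (α : ℝ) (φ : Ed d → ℝ) (η : Ed d) (L : ℝ) : Prop :=
  Filter.Tendsto
    (fun ε : ℝ => fracConst d α *
      ∫ θ in {θ : Ed d | θ ∈ unitSphere d ∧ ⟪θ, η⟫ ≤ Real.cos ε},
        (φ θ - φ η) * uKernel d α 0 ⟪θ, η⟫ ∂(sphMeasure d))
    (nhdsWithin 0 (Set.Ioi 0)) (nhds L)

/-- The integrand of the radial operator `R_λ`. -/
noncomputable def RopIntegrand (d : ℕ) (α lam : ℝ) (φ : Ed d → ℝ) (η θ : Ed d) : ℝ :=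
  φ θ * (uKernel d α lam ⟪θ, η⟫ - uKernel d α 0 ⟪θ, η⟫)

/-- The radial operator `R_λ φ (η)`. -/
noncomputable def Rop (d : ℕ) (α lam : ℝ) (φ : Ed d → ℝ) (η : Ed d) : ℝ :=
  fracConst d α * ∫ θ in unitSphere d, RopIntegrand d α lam φ η θ ∂(sphMeasure d)

/-- The modulus `ω`. -/
noncomputable def omegaFn (α Θ : ℝ) : ℝ :=
  if α < 1 then Θ ^ α else if α = 1 then Θ * |Real.log Θ| else Θ

/-- The Euler beta function. -/
noncomputable def eulerBeta (a b : ℝ) : ℝ := Real.Gamma a * Real.Gamma b / Real.Gamma (a + b)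

/-- The constant `B_{d,α}`. -/
noncomputable def Bconst (d : ℕ) (α : ℝ) : ℝ :=
  Real.Gamma (((d : ℝ) + α) / 2) / (π ^ ((3 : ℝ) / 2) * Real.Gamma (((d : ℝ) - 1 + α) / 2)) *
    Real.sin (π * α / 2) * eulerBeta (1 + α / 2) (((d : ℝ) - 1) / 2)

/-- The constant `C_{d-1,α}`. -/
noncomputable def Cexit (d : ℕ) (α : ℝ) : ℝ :=
  Real.Gamma (((d : ℝ) - 1) / 2) /
    (2 ^ α * Real.Gamma (((d : ℝ) - 1 + α) / 2) * Real.Gamma (1 + α / 2))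

/-- The constant `C̃_{d,α}`. -/
noncomputable def Ctilde (d : ℕ) (α : ℝ) : ℝ :=
  π ^ (((d : ℝ) - 1) / 2) / Real.Gamma (((d : ℝ) - 1) / 2) * Cexit d α *
    eulerBeta (1 + α / 2) (((d : ℝ) - 1) / 2)

/-- The norm `|ỹ|` of the first `d-1` coordinates of `y`. -/
noncomputable def tnorm (d : ℕ) (y : Ed d) : ℝ :=
  Real.sqrt (∑ i : Fin d, if (i : ℕ) < d - 1 then (y i) ^ 2 else 0)

/-- The function `s_ε`. -/
noncomputable def sExit (d : ℕ) (α ε : ℝ) (y : Ed d) : ℝ :=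
  Cexit d α * (max (ε ^ 2 - tnorm d y ^ 2) 0) ^ (α / 2)

/-- The cylinder `Π_ε`. -/
def cylPi (d : ℕ) (ε : ℝ) : Set (Ed d) := {y | tnorm d y < ε}

/-- The hyperplane `F = {y : y_d = 1}`. -/
def hyperF (d : ℕ) : Set (Ed d) := {y | lastCoord d y = 1}

/-- The Riesz kernel `h(y) = |y|^{α-d}`. -/
noncomputable def rieszH (d : ℕ) (α : ℝ) (y : Ed d) : ℝ := ‖y‖ ^ (α - (d : ℝ))

/-- The inversion `T x = x/|x|²`. -/
noncomputable def inversion (d : ℕ) (x : Ed d) : Ed d := (‖x‖ ^ 2)⁻¹ • x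

/-- The shifted cone `V_Θ = Γ_Θ + e_d/2`. -/
def Vcone (d : ℕ) (Θ : ℝ) : Set (Ed d) := {y | y - (1 / 2 : ℝ) • eLast d ∈ cone d Θ}

/-- The spindle `L_ε = T(V_Θ)` with `ε = tan(Θ/2)`, i.e. `Θ = 2 arctan ε`. -/
def Lspindle (d : ℕ) (ε : ℝ) : Set (Ed d) := inversion d '' Vcone d (2 * Real.arctan ε)

/-- The curvilinear projection `y* = T(e_d/2 + (Ty - e_d/2)/(2|Ty - e_d/2|))`. -/
noncomputable def ystar (d : ℕ) (y : Ed d) : Ed d :=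
  inversion d ((1 / 2 : ℝ) • eLast d +
    (2 * ‖inversion d y - (1 / 2 : ℝ) • eLast d‖)⁻¹ • (inversion d y - (1 / 2 : ℝ) • eLast d))

open scoped Classical in
/-- The function `s*_ε`. -/
noncomputable def sStar (d : ℕ) (α ε : ℝ) (y : Ed d) : ℝ :=
  if y ∈ Lspindle d ε then Cexit d α * (max (ε ^ 2 - tnorm d (ystar d y) ^ 2) 0) ^ (α / 2)
  else 0

open scoped Classical in
/-- The function `u = K(h s*_ε)`, i.e. `u(y) = s*_ε(Ty)`, `u(0) = 0`. -/
noncomputable def uFn (d : ℕ) (α ε : ℝ) (y : Ed d) : ℝ :=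
  if y = 0 then 0 else sStar d α ε (inversion d y)

/-- The spherical profile `φ_Θ`. -/
noncomputable def profileFn (d : ℕ) (α Θ : ℝ) (θ : Ed d) : ℝ :=
  2 ^ α * Cexit d α *
    (max (Real.tan (Θ / 2) ^ 2 - ‖eLast d - θ‖ ^ 2 / ‖eLast d + θ‖ ^ 2) 0) ^ (α / 2)

/-- Laplacian on ℝ^d as the sum of pure second partial derivatives. -/
noncomputable def lapE (d : ℕ) (u : Ed d → ℝ) (x : Ed d) : ℝ :=
  ∑ i : Fin d,
    iteratedFDeriv ℝ 2 u x ![EuclideanSpace.single i (1 : ℝ), EuclideanSpace.single i (1 : ℝ)]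

/-- Laplacian on ℝ^d × ℝ as the sum of the d+1 pure second partial derivatives. -/
noncomputable def lapProd (d : ℕ) (U : Ed d × ℝ → ℝ) (p : Ed d × ℝ) : ℝ :=
  (∑ i : Fin d, iteratedFDeriv ℝ 2 U p
      ![(EuclideanSpace.single i (1 : ℝ), (0 : ℝ)), (EuclideanSpace.single i (1 : ℝ), (0 : ℝ))]) +
    iteratedFDeriv ℝ 2 U p ![((0 : Ed d), (1 : ℝ)), ((0 : Ed d), (1 : ℝ))]

/-- The Poisson kernel `P_t(x)` for the upper half-space. -/
noncomputable def poissonK (d : ℕ) (t : ℝ) (x : Ed d) : ℝ :=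
  Real.Gamma (((d : ℝ) + 1) / 2) / π ^ (((d : ℝ) + 1) / 2) * t *
    (‖x‖ ^ 2 + t ^ 2) ^ (-((d : ℝ) + 1) / 2)

end

/-!
The inversion `r ↦ r⁻¹` maps `(1, ∞)` to `(0, 1)` and multiplies `r ^ 2 - 2 * r * t + 1` by
`r ^ (-2)`, so that `u_λ(t)` is the integral over `(0, 1)` of `r ^ (d+λ-1) + r ^ (α-λ-1)` against
`(r ^ 2 - 2 * r * t + 1) ^ (-(d+α)/2)`. In the difference `u_λ - u_0` the weights combine to
`(1 - r ^ λ) * (r ^ (α-λ-1) - r ^ (d-1))`. Near `r = 0` the term `r ^ (α-λ-1)` dominates and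
produces `1 / (α - λ)`; near `r = 1` both factors vanish, and integrating `(1 - r) ^ 2` against
`((1 - r) ^ 2 + (1 - t)) ^ (-(d+α)/2)` gives the power of `1 - t`.
-/

section ChangeOfVariables

variable {E : Type*} [NormedAddCommGroup E] [NormedSpace ℝ E] {f : ℝ → E}

theorem inv_image_Ioo_zero_one : (fun r : ℝ => r⁻¹) '' Ioo 0 1 = Ioi 1 := by
  rw [image_inv_eq_inv, inv_Ioo_0_left one_pos, inv_one]

theorem hasDerivWithinAt_inv_Ioo_zero_one :
    ∀ r ∈ Ioo (0 : ℝ) 1, HasDerivWithinAt (fun r : ℝ => r⁻¹) (-(r ^ 2)⁻¹) (Ioo 0 1) r :=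
  fun _ hr => (hasDerivAt_inv hr.1.ne').hasDerivWithinAt

theorem integrableOn_Ioi_one_iff_comp_inv :
    IntegrableOn f (Ioi 1) ↔ IntervalIntegrable (fun r : ℝ => (r ^ 2)⁻¹ • f r⁻¹) volume 0 1 := by
  rw [← inv_image_Ioo_zero_one, integrableOn_image_iff_integrableOn_abs_deriv_smul
    measurableSet_Ioo hasDerivWithinAt_inv_Ioo_zero_one inv_injective.injOn,
    intervalIntegrable_iff_integrableOn_Ioo_of_le zero_le_one]
  simp only [abs_neg, abs_inv, abs_sq]

theorem integral_Ioi_one_eq_comp_inv :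
    ∫ r in Ioi (1 : ℝ), f r = ∫ r in (0 : ℝ)..1, (r ^ 2)⁻¹ • f r⁻¹ := by
  rw [← inv_image_Ioo_zero_one, integral_image_eq_integral_abs_deriv_smul
    measurableSet_Ioo hasDerivWithinAt_inv_Ioo_zero_one inv_injective.injOn,
    intervalIntegral.integral_of_le zero_le_one, integral_Ioc_eq_integral_Ioo]
  simp only [abs_neg, abs_inv, abs_sq]

theorem integral_Ioi_zero_eq_add_comp_inv (hf : IntervalIntegrable f volume 0 1)
    (hf' : IntervalIntegrable (fun r : ℝ => (r ^ 2)⁻¹ • f r⁻¹) volume 0 1) :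
    ∫ r in Ioi (0 : ℝ), f r = ∫ r in (0 : ℝ)..1, (f r + (r ^ 2)⁻¹ • f r⁻¹) := by
  rw [← Ioc_union_Ioi_eq_Ioi zero_le_one, setIntegral_union Ioc_disjoint_Ioi_same measurableSet_Ioi
    ((intervalIntegrable_iff_integrableOn_Ioc_of_le zero_le_one).1 hf)
    (integrableOn_Ioi_one_iff_comp_inv.2 hf'), integral_Ioi_one_eq_comp_inv,
    ← intervalIntegral.integral_of_le zero_le_one, ← intervalIntegral.integral_add hf hf']

end ChangeOfVariables

section PowerFunctions

variable {a r s : ℝ}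

theorem one_sub_add_one_mul_le_one_sub_rpow (ha : 0 ≤ a) (hs0 : 0 ≤ s) (hs1 : s ≤ 1) :
    1 - (a + 1) * s ≤ (1 - s) ^ a :=
  calc 1 - (a + 1) * s = 1 + (a + 1) * -s := by ring
    _ ≤ (1 + -s) ^ (a + 1) := one_add_mul_self_le_rpow_one_add (by linarith) (by linarith)
    _ ≤ (1 - s) ^ a := by
        rw [← sub_eq_add_neg]
        exact Real.rpow_le_rpow_of_exponent_ge' (by linarith) (by linarith) ha (by linarith)

theorem one_sub_rpow_le (ha : 0 ≤ a) (hr0 : 0 ≤ r) (hr1 : r ≤ 1) :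
    1 - r ^ a ≤ (a + 1) * (1 - r) := by
  have h := one_sub_add_one_mul_le_one_sub_rpow (s := 1 - r) ha (by linarith) (by linarith)
  rw [sub_sub_cancel] at h
  linarith

theorem rpow_sub_one_mul_self_le_one (ha : 0 ≤ a) (hr0 : 0 < r) (hr1 : r ≤ 1) :
    r ^ (a - 1) * r ≤ 1 := by
  rw [← Real.rpow_add_one hr0.ne', sub_add_cancel]
  exact Real.rpow_le_one hr0.le hr1 ha

theorem intervalIntegrable_rpow_sub_one (ha : 0 < a) :
    IntervalIntegrable (fun r : ℝ => r ^ (a - 1)) volume 0 1 :=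
  intervalIntegral.intervalIntegrable_rpow' (by linarith)

theorem integral_rpow_sub_one (ha : 0 < a) : ∫ r in (0 : ℝ)..1, r ^ (a - 1) = 1 / a := by
  rw [integral_rpow (Or.inl (by linarith))]
  simp [Real.zero_rpow ha.ne']

end PowerFunctions

section RadialKernel

variable {a p r t : ℝ}

/-- The Riesz-type kernel `|rθ - η| ^ (-p)` for unit vectors `θ`, `η` with `⟪θ, η⟫ = t`,
the distance being expressed by the law of cosines. -/
noncomputable def radialKernel (p t r : ℝ) : ℝ := (r ^ 2 - 2 * r * t + 1) ^ (-p / 2)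

theorem sq_sub_two_mul_add_one_pos (hr : 0 ≤ r) (ht : t < 1) : 0 < r ^ 2 - 2 * r * t + 1 := by
  rcases hr.eq_or_lt with rfl | hr
  · norm_num
  · nlinarith [sq_nonneg (1 - r), mul_pos hr (sub_pos.2 ht)]

theorem radialKernel_nonneg (hr : 0 ≤ r) (ht : t < 1) : 0 ≤ radialKernel p t r :=
  Real.rpow_nonneg (sq_sub_two_mul_add_one_pos hr ht).le _

theorem continuousOn_radialKernel (ht : t < 1) : ContinuousOn (radialKernel p t) (Ici 0) :=
  ContinuousOn.rpow_const (by fun_prop) fun _ hr => Or.inl (sq_sub_two_mul_add_one_pos hr ht).ne'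

theorem radialKernel_inv (hr : 0 < r) (ht : t < 1) :
    radialKernel p t r⁻¹ = r ^ p * radialKernel p t r := by
  have hq : r⁻¹ ^ 2 - 2 * r⁻¹ * t + 1 = (r ^ 2)⁻¹ * (r ^ 2 - 2 * r * t + 1) := by
    field_simp
    ring
  have hpow : (r ^ 2)⁻¹ ^ (-p / 2) = r ^ p := by
    rw [neg_div, Real.inv_rpow (sq_nonneg r), Real.rpow_neg (sq_nonneg r), inv_inv,
      Real.rpow_div_two_eq_sqrt _ (sq_nonneg r), Real.sqrt_sq hr.le]
  rw [radialKernel, hq, Real.mul_rpow (by positivity) (sq_sub_two_mul_add_one_pos hr.le ht).le,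
    hpow, radialKernel]

theorem intervalIntegrable_rpow_mul_radialKernel (ha : 0 < a) (ht : t < 1) :
    IntervalIntegrable (fun r => r ^ (a - 1) * radialKernel p t r) volume 0 1 :=
  (intervalIntegrable_rpow_sub_one ha).mul_continuousOn <|
    (continuousOn_radialKernel ht).mono (by simp [uIcc_of_le, Icc_subset_Ici_self])

theorem one_sub_mul_le_radialKernel (hp : 0 ≤ p) (hr0 : 0 ≤ r) (hr1 : r ≤ 1) (ht : -1 ≤ t)
    (ht1 : t < 1) : 1 - (p + 1) * r ≤ radialKernel p t r := by
  have hq := sq_sub_two_mul_add_one_pos hr0 ht1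
  calc 1 - (p + 1) * r ≤ (1 - r) ^ p := one_sub_add_one_mul_le_one_sub_rpow hp hr0 hr1
    _ = ((1 - r) ^ 2) ^ (p / 2) := by
        rw [Real.rpow_div_two_eq_sqrt _ (sq_nonneg _), Real.sqrt_sq (by linarith)]
    _ ≤ (r ^ 2 - 2 * r * t + 1)⁻¹ ^ (p / 2) := by
        refine Real.rpow_le_rpow (sq_nonneg _) ?_ (by linarith)
        rw [← one_div, le_div_iff₀ hq]
        calc (1 - r) ^ 2 * (r ^ 2 - 2 * r * t + 1) ≤ (1 - r) ^ 2 * (1 + r) ^ 2 := by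
              gcongr
              nlinarith
          _ = (1 - r ^ 2) ^ 2 := by ring
          _ ≤ 1 := pow_le_one₀ (by nlinarith) (by nlinarith)
    _ = radialKernel p t r := by
        rw [radialKernel, neg_div, Real.rpow_neg hq.le, Real.inv_rpow hq.le]

theorem radialKernel_le_one_add_mul (hp : 0 ≤ p) (hr0 : 0 ≤ r) (hr : r ≤ 1 / 2) (ht : t < 1) :
    radialKernel p t r ≤ 1 + (p + 1) * 2 ^ p * r := by
  have hs : 0 < 1 - r := by linarith
  have hinv : (1 - r) ^ (-p) ≤ 2 ^ p := by
    rw [Real.rpow_neg_eq_inv_rpow]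
    refine Real.rpow_le_rpow (by positivity) ?_ hp
    rw [inv_le_comm₀ hs two_pos]
    linarith
  calc radialKernel p t r ≤ ((1 - r) ^ 2) ^ (-p / 2) :=
        Real.rpow_le_rpow_of_nonpos (by positivity) (by nlinarith) (by linarith)
    _ = (1 - r) ^ (-p) := by
        rw [Real.rpow_div_two_eq_sqrt _ (sq_nonneg _), Real.sqrt_sq hs.le]
    _ = 1 + (1 - (1 - r) ^ p) * (1 - r) ^ (-p) := by
        rw [sub_mul, ← Real.rpow_add hs, add_neg_cancel, Real.rpow_zero]
        ring
    _ ≤ 1 + (p + 1) * r * 2 ^ p := by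
        gcongr
        linarith [one_sub_add_one_mul_le_one_sub_rpow hp hr0 (by linarith)]
    _ = 1 + (p + 1) * 2 ^ p * r := by ring

theorem radialKernel_le_near_one (hp : 0 ≤ p) (hr : 1 / 2 ≤ r) (ht : t < 1) :
    radialKernel p t r ≤ ((1 - r) ^ 2 + (1 - t)) ^ (-p / 2) :=
  Real.rpow_le_rpow_of_nonpos (by nlinarith [sq_nonneg (1 - r)]) (by nlinarith) (by linarith)

end RadialKernel

section FoldedWeight

variable {D α lam r t : ℝ}

/-- The weight against which `radialKernel (D + α) t` is integrated over `(0, 1)` to give `u_λ(t)`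
in dimension `D`, once `(1, ∞)` has been folded onto `(0, 1)` by `r ↦ r⁻¹`. -/
noncomputable def foldedWeight (D α lam r : ℝ) : ℝ := r ^ (D + lam - 1) + r ^ (α - lam - 1)

theorem intervalIntegrable_foldedWeight_mul_radialKernel (hD : -D < lam) (hα : lam < α)
    (ht : t < 1) {p : ℝ} :
    IntervalIntegrable (fun r => foldedWeight D α lam r * radialKernel p t r) volume 0 1 := by
  simp only [foldedWeight, add_mul]
  exact (intervalIntegrable_rpow_mul_radialKernel (by linarith) ht).add
    (intervalIntegrable_rpow_mul_radialKernel (by linarith) ht)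

theorem inv_sq_mul_inv_rpow_mul_radialKernel_inv (hr : 0 < r) (ht : t < 1) :
    (r ^ 2)⁻¹ * (r⁻¹ ^ (D + lam - 1) * radialKernel (D + α) t r⁻¹) =
      r ^ (α - lam - 1) * radialKernel (D + α) t r := by
  have hexp : r ^ (α - lam - 1) = r ^ (-2 : ℝ) * r ^ (-(D + lam - 1)) * r ^ (D + α) := by
    rw [← Real.rpow_add hr, ← Real.rpow_add hr]
    ring_nf
  rw [radialKernel_inv hr ht, Real.inv_rpow hr.le, ← Real.rpow_neg hr.le, hexp,
    Real.rpow_neg hr.le 2, Real.rpow_two]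
  ring

theorem uKernel_eq_integral_foldedWeight {d : ℕ} (hd : -(d : ℝ) < lam) (hα : lam < α) (ht : t < 1) :
    uKernel d α lam t =
      ∫ r in (0 : ℝ)..1, foldedWeight d α lam r * radialKernel (d + α) t r := by
  have hfold : EqOn (fun r => r ^ (α - lam - 1) * radialKernel (d + α) t r)
      (fun r => (r ^ 2)⁻¹ • (r⁻¹ ^ ((d : ℝ) + lam - 1) * radialKernel (d + α) t r⁻¹)) (Ioo 0 1) :=
    fun r hr => (inv_sq_mul_inv_rpow_mul_radialKernel_inv hr.1 ht).symm
  have hint := intervalIntegrable_rpow_mul_radialKernel (a := α - lam) (p := d + α) (by linarith) ht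
  calc uKernel d α lam t = ∫ r in Ioi (0 : ℝ), r ^ ((d : ℝ) + lam - 1) * radialKernel (d + α) t r :=
        rfl
    _ = ∫ r in (0 : ℝ)..1, (r ^ ((d : ℝ) + lam - 1) * radialKernel (d + α) t r +
          (r ^ 2)⁻¹ • (r⁻¹ ^ ((d : ℝ) + lam - 1) * radialKernel (d + α) t r⁻¹)) :=
        integral_Ioi_zero_eq_add_comp_inv
          (intervalIntegrable_rpow_mul_radialKernel (by linarith) ht)
          (hint.congr_uIoo (by rwa [uIoo_of_le zero_le_one]))
    _ = ∫ r in (0 : ℝ)..1, foldedWeight d α lam r * radialKernel (d + α) t r :=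
        intervalIntegral.integral_congr_Ioo_of_le zero_le_one fun r hr => by
          simp only [foldedWeight, add_mul, ← hfold hr]

theorem foldedWeight_sub_eq_mul (hr : 0 < r) :
    foldedWeight D α lam r - foldedWeight D α 0 r =
      (1 - r ^ lam) * (r ^ (α - lam - 1) - r ^ (D - 1)) := by
  have hD : r ^ (D + lam - 1) = r ^ lam * r ^ (D - 1) := by
    rw [← Real.rpow_add hr]
    ring_nf
  have hα : r ^ (α - 1) = r ^ lam * r ^ (α - lam - 1) := by
    rw [← Real.rpow_add hr]
    ring_nf
  simp only [foldedWeight, add_zero, sub_zero, hD, hα]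
  ring

theorem foldedWeight_sub_nonneg (hlam : 0 ≤ lam) (hD : α - lam ≤ D) (hr0 : 0 < r) (hr1 : r ≤ 1) :
    0 ≤ foldedWeight D α lam r - foldedWeight D α 0 r := by
  rw [foldedWeight_sub_eq_mul hr0]
  exact mul_nonneg (sub_nonneg.2 (Real.rpow_le_one hr0.le hr1 hlam))
    (sub_nonneg.2 (Real.rpow_le_rpow_of_exponent_ge hr0 hr1 (by linarith)))

theorem foldedWeight_sub_le_rpow (hlam : 0 ≤ lam) (hr0 : 0 < r) (hr1 : r ≤ 1) :
    foldedWeight D α lam r - foldedWeight D α 0 r ≤ r ^ (α - lam - 1) := by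
  have hmono : r ^ (D + lam - 1) ≤ r ^ (D - 1) :=
    Real.rpow_le_rpow_of_exponent_ge hr0 hr1 (by linarith)
  simp only [foldedWeight, add_zero, sub_zero]
  linarith [Real.rpow_nonneg hr0.le (α - 1)]

theorem rpow_sub_sub_le_foldedWeight_sub (hr : 0 < r) :
    r ^ (α - lam - 1) - r ^ (α - 1) - r ^ (D - 1) ≤
      foldedWeight D α lam r - foldedWeight D α 0 r := by
  simp only [foldedWeight, add_zero, sub_zero]
  linarith [Real.rpow_nonneg hr.le (D + lam - 1)]

theorem foldedWeight_sub_le_sq (hD : 0 ≤ D) (hlam : 0 ≤ lam) (hα : lam ≤ α) (hr : 1 / 2 ≤ r)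
    (hr1 : r ≤ 1) :
    foldedWeight D α lam r - foldedWeight D α 0 r ≤ 2 * (α + 1) * (D + 1) * (1 - r) ^ 2 := by
  have hr0 : 0 < r := by linarith
  have hs : 0 ≤ 1 - r := by linarith
  have hfst : 1 - r ^ lam ≤ (α + 1) * (1 - r) :=
    (one_sub_rpow_le hlam hr0.le hr1).trans (by gcongr)
  have hsnd : r ^ (α - lam - 1) - r ^ (D - 1) ≤ 2 * (D + 1) * (1 - r) :=
    calc r ^ (α - lam - 1) - r ^ (D - 1) ≤ r ^ (-1 : ℝ) - r ^ (D - 1) :=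
          sub_le_sub_right (Real.rpow_le_rpow_of_exponent_ge hr0 hr1 (by linarith)) _
      _ = r⁻¹ * (1 - r ^ D) := by
          rw [Real.rpow_sub_one hr0.ne', Real.rpow_neg_one]
          ring
      _ ≤ 2 * ((D + 1) * (1 - r)) :=
          mul_le_mul (inv_le_of_inv_le₀ two_pos (by linarith)) (one_sub_rpow_le hD hr0.le hr1)
            (sub_nonneg.2 (Real.rpow_le_one hr0.le hr1 hD)) zero_le_two
      _ = 2 * (D + 1) * (1 - r) := by ring
  calc foldedWeight D α lam r - foldedWeight D α 0 r
      = (1 - r ^ lam) * (r ^ (α - lam - 1) - r ^ (D - 1)) := foldedWeight_sub_eq_mul hr0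
    _ ≤ (1 - r ^ lam) * (2 * (D + 1) * (1 - r)) :=
        mul_le_mul_of_nonneg_left hsnd (sub_nonneg.2 (Real.rpow_le_one hr0.le hr1 hlam))
    _ ≤ (α + 1) * (1 - r) * (2 * (D + 1) * (1 - r)) :=
        mul_le_mul_of_nonneg_right hfst (mul_nonneg (by positivity) hs)
    _ = 2 * (α + 1) * (D + 1) * (1 - r) ^ 2 := by ring

end FoldedWeight

section PointwiseBounds

variable {D α lam p r t : ℝ}

theorem rpow_sub_le_foldedWeight_sub_mul_radialKernel (hp : 0 ≤ p) (hlam : 0 ≤ lam) (hα : lam ≤ α)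
    (hD : α - lam ≤ D) (hr0 : 0 < r) (hr1 : r ≤ 1) (ht : -1 ≤ t) (ht1 : t < 1) :
    r ^ (α - lam - 1) - r ^ (α - 1) - r ^ (D - 1) - (p + 1) ≤
      (foldedWeight D α lam r - foldedWeight D α 0 r) * radialKernel p t r := by
  have hw := foldedWeight_sub_nonneg hlam hD hr0 hr1
  have hwr : (foldedWeight D α lam r - foldedWeight D α 0 r) * r ≤ 1 :=
    (mul_le_mul_of_nonneg_right (foldedWeight_sub_le_rpow hlam hr0 hr1) hr0.le).trans
      (rpow_sub_one_mul_self_le_one (sub_nonneg.2 hα) hr0 hr1)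
  calc r ^ (α - lam - 1) - r ^ (α - 1) - r ^ (D - 1) - (p + 1)
      ≤ (foldedWeight D α lam r - foldedWeight D α 0 r) -
          (p + 1) * ((foldedWeight D α lam r - foldedWeight D α 0 r) * r) :=
        sub_le_sub (rpow_sub_sub_le_foldedWeight_sub hr0)
          (mul_le_of_le_one_right (by linarith) hwr)
    _ = (foldedWeight D α lam r - foldedWeight D α 0 r) * (1 - (p + 1) * r) := by ring
    _ ≤ (foldedWeight D α lam r - foldedWeight D α 0 r) * radialKernel p t r :=
        mul_le_mul_of_nonneg_left (one_sub_mul_le_radialKernel hp hr0.le hr1 ht ht1) hw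

theorem foldedWeight_sub_mul_radialKernel_le_of_le_half (hp : 0 ≤ p) (hlam : 0 ≤ lam)
    (hα : lam ≤ α) (hr0 : 0 < r) (hr : r ≤ 1 / 2) (ht : t < 1) :
    (foldedWeight D α lam r - foldedWeight D α 0 r) * radialKernel p t r ≤
      r ^ (α - lam - 1) + (p + 1) * 2 ^ p :=
  calc (foldedWeight D α lam r - foldedWeight D α 0 r) * radialKernel p t r
      ≤ r ^ (α - lam - 1) * (1 + (p + 1) * 2 ^ p * r) :=
        mul_le_mul (foldedWeight_sub_le_rpow hlam hr0 (by linarith))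
          (radialKernel_le_one_add_mul hp hr0.le hr ht) (radialKernel_nonneg hr0.le ht)
          (by positivity)
    _ = r ^ (α - lam - 1) + (p + 1) * 2 ^ p * (r ^ (α - lam - 1) * r) := by ring
    _ ≤ r ^ (α - lam - 1) + (p + 1) * 2 ^ p := by
        grw [mul_le_of_le_one_right (by positivity)
          (rpow_sub_one_mul_self_le_one (sub_nonneg.2 hα) hr0 (by linarith))]

theorem foldedWeight_sub_mul_radialKernel_le_of_half_le (hD : 0 ≤ D) (hp : 0 ≤ p) (hlam : 0 ≤ lam)
    (hα : lam ≤ α) (hr : 1 / 2 ≤ r) (hr1 : r ≤ 1) (ht : t < 1) :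
    (foldedWeight D α lam r - foldedWeight D α 0 r) * radialKernel p t r ≤
      2 * (α + 1) * (D + 1) * ((1 - r) ^ 2 * ((1 - r) ^ 2 + (1 - t)) ^ (-p / 2)) := by
  rw [← mul_assoc]
  have hα0 : 0 ≤ α := hlam.trans hα
  exact mul_le_mul (foldedWeight_sub_le_sq hD hlam hα hr hr1) (radialKernel_le_near_one hp hr ht)
    (radialKernel_nonneg (by linarith) ht) (by positivity)

theorem foldedWeight_sub_mul_radialKernel_le (hD : 0 ≤ D) (hp : 0 ≤ p) (hlam : 0 ≤ lam)
    (hα : lam ≤ α) (hr0 : 0 < r) (hr1 : r ≤ 1) (ht : t < 1) :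
    (foldedWeight D α lam r - foldedWeight D α 0 r) * radialKernel p t r ≤
      r ^ (α - lam - 1) + (p + 1) * 2 ^ p +
        2 * (α + 1) * (D + 1) * ((1 - r) ^ 2 * ((1 - r) ^ 2 + (1 - t)) ^ (-p / 2)) := by
  have hα0 : 0 ≤ α := hlam.trans hα
  have hnear : 0 ≤ (1 - r) ^ 2 + (1 - t) := add_nonneg (sq_nonneg _) (by linarith)
  rcases le_total r (1 / 2) with hr | hr
  · exact le_add_of_le_of_nonneg
      (foldedWeight_sub_mul_radialKernel_le_of_le_half hp hlam hα hr0 hr ht)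
      (mul_nonneg (by positivity) (mul_nonneg (sq_nonneg _) (Real.rpow_nonneg hnear _)))
  · exact le_add_of_nonneg_of_le (by positivity)
      (foldedWeight_sub_mul_radialKernel_le_of_half_le hD hp hlam hα hr hr1 ht)

end PointwiseBounds

section NearOne

variable {m p s w : ℝ}

theorem intervalIntegrable_sq_mul_sq_add_rpow (hm : 0 < m) :
    IntervalIntegrable (fun s : ℝ => s ^ 2 * (s ^ 2 + m) ^ (-p / 2)) volume 0 1 :=
  (Continuous.mul (by fun_prop) (Continuous.rpow_const (by fun_prop) fun _ =>
    Or.inl (by positivity))).intervalIntegrable _ _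

theorem integral_sq_mul_sq_add_rpow_le_of_lt_three (hp0 : 0 ≤ p) (hp : p < 3) (hm : 0 < m) :
    ∫ s in (0 : ℝ)..1, s ^ 2 * (s ^ 2 + m) ^ (-p / 2) ≤ 1 / (3 - p) := by
  have hp3 : 0 < 3 - p := sub_pos.2 hp
  rw [← integral_rpow_sub_one hp3]
  refine intervalIntegral.integral_mono_on_of_le_Ioo zero_le_one
    (intervalIntegrable_sq_mul_sq_add_rpow hm) (intervalIntegrable_rpow_sub_one hp3) fun s hs => ?_
  have hs0 : 0 < s := hs.1
  calc s ^ 2 * (s ^ 2 + m) ^ (-p / 2) ≤ s ^ 2 * (s ^ 2) ^ (-p / 2) :=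
        mul_le_mul_of_nonneg_left (Real.rpow_le_rpow_of_nonpos (by positivity) (by linarith)
          (by linarith)) (sq_nonneg s)
    _ = s ^ (3 - p - 1) := by
        rw [Real.rpow_div_two_eq_sqrt _ (sq_nonneg s), Real.sqrt_sq hs0.le, ← Real.rpow_two,
          ← Real.rpow_add hs0]
        ring_nf

theorem sq_mul_sq_add_sq_rpow_le (hp : 2 ≤ p) (hs : 0 ≤ s) (hw : 0 < w) :
    s ^ 2 * (s ^ 2 + w ^ 2) ^ (-p / 2) ≤ 2 ^ ((p - 2) / 2) * (s + w) ^ (2 - p) :=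
  calc s ^ 2 * (s ^ 2 + w ^ 2) ^ (-p / 2) ≤ (s ^ 2 + w ^ 2) * (s ^ 2 + w ^ 2) ^ (-p / 2) := by
        gcongr
        linarith [sq_nonneg w]
    _ = (s ^ 2 + w ^ 2) ^ ((2 - p) / 2) := by
        rw [mul_comm, ← Real.rpow_add_one (by positivity)]
        ring_nf
    _ ≤ ((s + w) ^ 2 / 2) ^ ((2 - p) / 2) :=
        Real.rpow_le_rpow_of_nonpos (by positivity) (by linarith [add_sq_le (a := s) (b := w)])
          (by linarith)
    _ = 2 ^ ((p - 2) / 2) * (s + w) ^ (2 - p) := by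
        rw [Real.div_rpow (sq_nonneg _) zero_le_two, Real.rpow_div_two_eq_sqrt _ (sq_nonneg _),
          Real.sqrt_sq (by positivity), div_eq_inv_mul, ← Real.rpow_neg zero_le_two]
        ring_nf

theorem integral_add_rpow_le (hp : 3 < p) (hw : 0 < w) :
    ∫ s in (0 : ℝ)..1, (s + w) ^ (2 - p) ≤ w ^ (-(p - 3)) / (p - 3) := by
  rw [intervalIntegral.integral_comp_add_right (fun x => x ^ (2 - p)), integral_rpow
    (Or.inr ⟨by linarith, notMem_uIcc_of_lt (by linarith) (by linarith)⟩)]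
  calc ((1 + w) ^ (2 - p + 1) - (0 + w) ^ (2 - p + 1)) / (2 - p + 1)
      = (w ^ (-(p - 3)) - (1 + w) ^ (-(p - 3))) / (p - 3) := by
        rw [zero_add, show 2 - p + 1 = -(p - 3) by ring, div_neg, ← neg_div, neg_sub]
    _ ≤ w ^ (-(p - 3)) / (p - 3) :=
        div_le_div_of_nonneg_right (sub_le_self _ (by positivity)) (sub_pos.2 hp).le

theorem integral_sq_mul_sq_add_rpow_le_of_three_lt (hp : 3 < p) (hm : 0 < m) :
    ∫ s in (0 : ℝ)..1, s ^ 2 * (s ^ 2 + m) ^ (-p / 2) ≤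
      2 ^ ((p - 2) / 2) / (p - 3) * m ^ (-(p - 3) / 2) := by
  have hw : 0 < √m := Real.sqrt_pos.2 hm
  have hint : IntervalIntegrable (fun s => (s + √m) ^ (2 - p)) volume 0 1 := by
    refine ContinuousOn.intervalIntegrable_of_Icc zero_le_one
      (ContinuousOn.rpow_const (by fun_prop) fun s hs => Or.inl ?_)
    linarith [hs.1]
  calc ∫ s in (0 : ℝ)..1, s ^ 2 * (s ^ 2 + m) ^ (-p / 2)
      ≤ ∫ s in (0 : ℝ)..1, 2 ^ ((p - 2) / 2) * (s + √m) ^ (2 - p) := by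
        refine intervalIntegral.integral_mono_on zero_le_one
          (intervalIntegrable_sq_mul_sq_add_rpow hm) (hint.const_mul _) fun s hs => ?_
        simpa only [Real.sq_sqrt hm.le] using sq_mul_sq_add_sq_rpow_le (by linarith) hs.1 hw
    _ = 2 ^ ((p - 2) / 2) * ∫ s in (0 : ℝ)..1, (s + √m) ^ (2 - p) :=
        intervalIntegral.integral_const_mul _ _
    _ ≤ 2 ^ ((p - 2) / 2) * (√m ^ (-(p - 3)) / (p - 3)) := by
        gcongr
        exact integral_add_rpow_le hp hw
    _ = 2 ^ ((p - 2) / 2) / (p - 3) * m ^ (-(p - 3) / 2) := by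
        rw [Real.rpow_div_two_eq_sqrt _ hm.le]
        ring

theorem exists_integral_sq_mul_sq_add_rpow_le (hp : 0 ≤ p) (hne : p ≠ 3) :
    ∃ K : ℝ, 0 < K ∧ ∀ m : ℝ, 0 < m →
      ∫ s in (0 : ℝ)..1, s ^ 2 * (s ^ 2 + m) ^ (-p / 2) ≤ K * max 1 (m ^ (-(p - 3) / 2)) := by
  rcases hne.lt_or_gt with hlt | hgt
  · have hK : 0 < 1 / (3 - p) := one_div_pos.2 (sub_pos.2 hlt)
    exact ⟨_, hK, fun m hm => (integral_sq_mul_sq_add_rpow_le_of_lt_three hp hlt hm).trans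
      (le_mul_of_one_le_right hK.le (le_max_left _ _))⟩
  · have hK : 0 < 2 ^ ((p - 2) / 2) / (p - 3) := div_pos (by positivity) (sub_pos.2 hgt)
    exact ⟨_, hK, fun m hm => (integral_sq_mul_sq_add_rpow_le_of_three_lt hgt hm).trans
      (mul_le_mul_of_nonneg_left (le_max_right _ _) hK.le)⟩

end NearOne

section KernelDifference

variable {d : ℕ} {α lam t : ℝ}

theorem intervalIntegrable_foldedWeight_sub_mul_radialKernel {D p : ℝ} (hD : 0 < D)
    (hlam : 0 ≤ lam) (hα : lam < α) (ht : t < 1) :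
    IntervalIntegrable (fun r =>
      (foldedWeight D α lam r - foldedWeight D α 0 r) * radialKernel p t r) volume 0 1 := by
  simp only [sub_mul]
  exact (intervalIntegrable_foldedWeight_mul_radialKernel (by linarith) hα ht).sub
    (intervalIntegrable_foldedWeight_mul_radialKernel (by linarith) (by linarith) ht)

theorem uKernel_sub_eq_integral (hd : 0 < d) (hlam : 0 ≤ lam) (hα : lam < α) (ht : t < 1) :
    uKernel d α lam t - uKernel d α 0 t =
      ∫ r in (0 : ℝ)..1,
        (foldedWeight d α lam r - foldedWeight d α 0 r) * radialKernel (d + α) t r := by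
  have hd0 : (0 : ℝ) < d := Nat.cast_pos.2 hd
  rw [uKernel_eq_integral_foldedWeight (by linarith) hα ht,
    uKernel_eq_integral_foldedWeight (by linarith) (by linarith) ht,
    ← intervalIntegral.integral_sub
      (intervalIntegrable_foldedWeight_mul_radialKernel (by linarith) hα ht)
      (intervalIntegrable_foldedWeight_mul_radialKernel (by linarith) (by linarith) ht)]
  simp only [sub_mul]

theorem one_div_sub_le_uKernel_sub (hd : 0 < d) (hlam : 0 ≤ lam) (hα : lam < α)
    (hαd : α - lam ≤ d) (ht : -1 ≤ t) (ht1 : t < 1) :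
    1 / (α - lam) - (1 / α + 1 / d + (d + α + 1)) ≤ uKernel d α lam t - uKernel d α 0 t := by
  have hd0 : (0 : ℝ) < d := Nat.cast_pos.2 hd
  have hα0 : 0 < α := hlam.trans_lt hα
  have hε := intervalIntegrable_rpow_sub_one (sub_pos.2 hα)
  have hεα := hε.sub (intervalIntegrable_rpow_sub_one hα0)
  have hεαd := hεα.sub (intervalIntegrable_rpow_sub_one hd0)
  calc 1 / (α - lam) - (1 / α + 1 / d + (d + α + 1))
      = ∫ r in (0 : ℝ)..1,
          (r ^ (α - lam - 1) - r ^ (α - 1) - r ^ ((d : ℝ) - 1) - (d + α + 1)) := by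
        rw [intervalIntegral.integral_sub hεαd intervalIntegrable_const,
          intervalIntegral.integral_sub hεα (intervalIntegrable_rpow_sub_one hd0),
          intervalIntegral.integral_sub hε (intervalIntegrable_rpow_sub_one hα0),
          integral_rpow_sub_one (sub_pos.2 hα), integral_rpow_sub_one hα0,
          integral_rpow_sub_one hd0, intervalIntegral.integral_const, sub_zero, one_smul]
        ring
    _ ≤ ∫ r in (0 : ℝ)..1,
          (foldedWeight d α lam r - foldedWeight d α 0 r) * radialKernel (d + α) t r :=
        intervalIntegral.integral_mono_on_of_le_Ioo zero_le_one
          (hεαd.sub intervalIntegrable_const)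
          (intervalIntegrable_foldedWeight_sub_mul_radialKernel hd0 hlam hα ht1)
          fun r hr => rpow_sub_le_foldedWeight_sub_mul_radialKernel (by positivity) hlam hα.le hαd
            hr.1 hr.2.le ht ht1
    _ = uKernel d α lam t - uKernel d α 0 t := (uKernel_sub_eq_integral hd hlam hα ht1).symm

theorem uKernel_sub_le_integral (hd : 0 < d) (hlam : 0 ≤ lam) (hα : lam < α) (ht : t < 1) :
    uKernel d α lam t - uKernel d α 0 t ≤
      1 / (α - lam) + (d + α + 1) * 2 ^ (d + α) +
        2 * (α + 1) * (d + 1) *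
          ∫ s in (0 : ℝ)..1, s ^ 2 * (s ^ 2 + (1 - t)) ^ (-((d : ℝ) + α) / 2) := by
  have hd0 : (0 : ℝ) < d := Nat.cast_pos.2 hd
  have hα0 : 0 < α := hlam.trans_lt hα
  have hε := intervalIntegrable_rpow_sub_one (sub_pos.2 hα)
  have hnear : IntervalIntegrable
      (fun r : ℝ => (1 - r) ^ 2 * ((1 - r) ^ 2 + (1 - t)) ^ (-((d : ℝ) + α) / 2)) volume 0 1 := by
    simpa only [sub_zero, sub_self] using
      ((intervalIntegrable_sq_mul_sq_add_rpow (sub_pos.2 ht)).comp_sub_left 1).symm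
  calc uKernel d α lam t - uKernel d α 0 t
      = ∫ r in (0 : ℝ)..1,
          (foldedWeight d α lam r - foldedWeight d α 0 r) * radialKernel (d + α) t r :=
        uKernel_sub_eq_integral hd hlam hα ht
    _ ≤ ∫ r in (0 : ℝ)..1, (r ^ (α - lam - 1) + (d + α + 1) * 2 ^ (d + α) +
          2 * (α + 1) * (d + 1) *
            ((1 - r) ^ 2 * ((1 - r) ^ 2 + (1 - t)) ^ (-((d : ℝ) + α) / 2))) :=
        intervalIntegral.integral_mono_on_of_le_Ioo zero_le_one
          (intervalIntegrable_foldedWeight_sub_mul_radialKernel hd0 hlam hα ht)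
          ((hε.add intervalIntegrable_const).add (hnear.const_mul _))
          fun r hr => foldedWeight_sub_mul_radialKernel_le hd0.le (by positivity) hlam hα.le
            hr.1 hr.2.le ht
    _ = _ := by
        rw [intervalIntegral.integral_add (hε.add intervalIntegrable_const) (hnear.const_mul _),
          intervalIntegral.integral_add hε intervalIntegrable_const,
          integral_rpow_sub_one (sub_pos.2 hα), intervalIntegral.integral_const,
          intervalIntegral.integral_const_mul, intervalIntegral.integral_comp_sub_left
            (fun s => s ^ 2 * (s ^ 2 + (1 - t)) ^ (-((d : ℝ) + α) / 2)), sub_self, sub_zero,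
          one_smul]

theorem exists_uKernel_sub_le (hd : 0 < d) (hα0 : 0 < α) (hne : (d : ℝ) + α ≠ 3) :
    ∃ C : ℝ, 0 < C ∧ ∀ lam : ℝ, 0 ≤ lam → lam < α → ∀ t < 1,
      uKernel d α lam t - uKernel d α 0 t ≤
        1 / (α - lam) + C * max 1 ((1 - t) ^ (-((d : ℝ) + α - 3) / 2)) := by
  obtain ⟨K, hK, hint⟩ := exists_integral_sq_mul_sq_add_rpow_le (by positivity) hne
  refine ⟨(d + α + 1) * 2 ^ (d + α) + 2 * (α + 1) * (d + 1) * K, by positivity,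
    fun lam hlam hα t ht => ?_⟩
  set M := max 1 ((1 - t) ^ (-((d : ℝ) + α - 3) / 2))
  calc uKernel d α lam t - uKernel d α 0 t
      ≤ 1 / (α - lam) + (d + α + 1) * 2 ^ (d + α) + 2 * (α + 1) * (d + 1) *
          ∫ s in (0 : ℝ)..1, s ^ 2 * (s ^ 2 + (1 - t)) ^ (-((d : ℝ) + α) / 2) :=
        uKernel_sub_le_integral hd hlam hα ht
    _ ≤ 1 / (α - lam) + (d + α + 1) * 2 ^ (d + α) * M + 2 * (α + 1) * (d + 1) * (K * M) := by
        refine add_le_add (add_le_add_right ?_ _)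
          (mul_le_mul_of_nonneg_left (hint _ (sub_pos.2 ht)) (by positivity))
        exact le_mul_of_one_le_right (by positivity) (le_max_left _ _)
    _ = 1 / (α - lam) + ((d + α + 1) * 2 ^ (d + α) + 2 * (α + 1) * (d + 1) * K) * M := by ring

end KernelDifference

theorem uKernel_diff_bounds_general (d : ℕ) (α : ℝ) (hα : 0 < α) (hαd : α ≤ d)
    (hne : (d : ℝ) + α ≠ 3) :
    ∃ C : ℝ, 0 < C ∧ ∀ lam : ℝ, 0 ≤ lam → lam < α → ∀ t ∈ Ico (-1 : ℝ) 1,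
      1 / (α - lam) - C ≤ uKernel d α lam t - uKernel d α 0 t ∧
      uKernel d α lam t - uKernel d α 0 t ≤
        1 / (α - lam) + C * max 1 ((1 - t) ^ (-((d : ℝ) + α - 3) / 2)) := by
  have hd : 0 < d := Nat.cast_pos.1 (hα.trans_le hαd)
  obtain ⟨C, hC, hupper⟩ := exists_uKernel_sub_le hd hα hne
  have hc : 0 < 1 / α + 1 / d + (d + α + 1) := by positivity
  refine ⟨1 / α + 1 / d + (d + α + 1) + C, by positivity, fun lam hlam hlamα t ht => ⟨?_, ?_⟩⟩
  · linarith [one_div_sub_le_uKernel_sub hd hlam hlamα (by linarith) ht.1 ht.2]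
  · refine (hupper lam hlam hlamα t ht.2).trans ?_
    gcongr
    exact le_add_of_nonneg_left hc.le

theorem mul_le_div_rpow_add_mul_div_rpow {C M x δ : ℝ} (hC : 0 ≤ C) (hM : 0 ≤ M) (hx0 : 0 < x)
    (hx1 : x ≤ 1) (hδ : 0 ≤ δ) : C * M ≤ C / x ^ (1 - δ) + C * M / x ^ δ :=
  (le_div_self (by positivity) (by positivity) (Real.rpow_le_one hx0.le hx1 hδ)).trans
    (le_add_of_nonneg_left (by positivity))

/-- two-sided bounds for `u_λ(t) - u_0(t)` when `0 < λ < α < λ+1`. -/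
theorem uKernel_diff_bounds (d : ℕ) (hd : 2 ≤ d) (α : ℝ) (hα : 0 < α) (hα2 : α < 2)
    (hne : (d : ℝ) + α ≠ 3) :
    (∃ c : ℝ, 0 < c ∧ ∀ lam : ℝ, 0 < lam → lam < α → α < lam + 1 →
      ∀ t ∈ Set.Ico (-1 : ℝ) 1,
        1 / (α - lam) - c ≤ uKernel d α lam t - uKernel d α 0 t) ∧
    (∀ δ ∈ Set.Ioo (0 : ℝ) 1, ∃ C : ℝ, 0 < C ∧ ∀ lam : ℝ, 0 < lam → lam < α → α < lam + 1 →
      ∀ t ∈ Set.Ico (-1 : ℝ) 1,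
        uKernel d α lam t - uKernel d α 0 t ≤
          1 / (α - lam) + C / (α - lam) ^ (1 - δ) +
            C * max 1 ((1 - t) ^ (-((d : ℝ) + α - 3) / 2)) / (α - lam) ^ δ) := by
  have hαd : α ≤ d := hα2.le.trans (by exact_mod_cast hd)
  obtain ⟨C, hC, h⟩ := uKernel_diff_bounds_general d α hα hαd hne
  refine ⟨⟨C, hC, fun lam hlam hlamα _ t ht => (h lam hlam.le hlamα t ht).1⟩, fun δ hδ =>
    ⟨C, hC, fun lam hlam hlamα hαlam t ht => (h lam hlam.le hlamα t ht).2.trans ?_⟩⟩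
  rw [add_assoc]
  gcongr
  exact mul_le_div_rpow_add_mul_div_rpow hC.le (by positivity) (sub_pos.2 hlamα) (by linarith)
    hδ.1.le
end

section
/- For every α ∈ (0,2) and all real numbers s, t with 0 < s < t: t^{α/2} - s^{α/2} ≥ (α/8)·(t-s)·min(s^{α/2-1}, (t-s)^{α/2-1}). -/
/-!
By the mean value theorem `t ^ p - s ^ p = p * c ^ (p - 1) * (t - s)` for some `c` between `s` and
`t = s + (t - s)`. If `p ≥ 1` then `c ^ (p - 1) ≥ s ^ (p - 1)`; if `p ≤ 1` then
`c ≤ 2 * max s (t - s)`, and doubling the base at most halves a power with exponent `p - 1 ≥ -1`.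
-/

open MeasureTheory Metric Real Set Filter RealInnerProductSpace
open scoped ENNReal

theorem exists_rpow_sub_rpow_eq_mul {s t : ℝ} (p : ℝ) (hs : 0 < s) (hst : s < t) :
    ∃ c ∈ Ioo s t, t ^ p - s ^ p = p * c ^ (p - 1) * (t - s) := by
  have hderiv : ∀ x ∈ Icc s t, HasDerivAt (fun y : ℝ ↦ y ^ p) (p * x ^ (p - 1)) x :=
    fun x hx ↦ hasDerivAt_rpow_const (Or.inl (hs.trans_le hx.1).ne')
  obtain ⟨c, hc, hslope⟩ := exists_hasDerivAt_eq_slope _ _ hst (HasDerivAt.continuousOn hderiv)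
    fun x hx ↦ hderiv x (Ioo_subset_Icc_self hx)
  exact ⟨c, hc, ((eq_div_iff (sub_pos.2 hst).ne').1 hslope).symm⟩

theorem min_rpow_rpow_le_max_rpow (x y q : ℝ) : min (x ^ q) (y ^ q) ≤ max x y ^ q := by
  rcases max_choice x y with h | h <;> simp [h]

theorem half_mul_rpow_le_two_mul_rpow {x q : ℝ} (hx : 0 ≤ x) (hq : -1 ≤ q) :
    1 / 2 * x ^ q ≤ (2 * x) ^ q := by
  have half_le : (1 / 2 : ℝ) ≤ 2 ^ q := by
    simpa [rpow_neg_one] using rpow_le_rpow_of_exponent_le one_le_two hq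
  rw [mul_rpow zero_le_two hx]
  gcongr

theorem half_mul_min_rpow_rpow_le_rpow {x y z q : ℝ} (hx : 0 < x) (hxz : x ≤ z)
    (hzxy : z ≤ x + y) (hq : -1 ≤ q) : 1 / 2 * min (x ^ q) (y ^ q) ≤ z ^ q := by
  rcases le_total 0 q with hq0 | hq0
  · calc 1 / 2 * min (x ^ q) (y ^ q) ≤ 1 / 2 * x ^ q := by gcongr; exact min_le_left _ _
      _ ≤ x ^ q := by linarith [rpow_nonneg hx.le q]
      _ ≤ z ^ q := rpow_le_rpow hx.le hxz hq0
  · have hmax : 0 < max x y := lt_max_of_lt_left hx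
    have hz : z ≤ 2 * max x y := by linarith [le_max_left x y, le_max_right x y]
    calc 1 / 2 * min (x ^ q) (y ^ q) ≤ 1 / 2 * max x y ^ q := by
          gcongr; exact min_rpow_rpow_le_max_rpow x y q
      _ ≤ (2 * max x y) ^ q := half_mul_rpow_le_two_mul_rpow hmax.le hq
      _ ≤ z ^ q := rpow_le_rpow_of_nonpos (hx.trans_le hxz) hz hq0

theorem rpow_diff_lower_general {p s t : ℝ} (hp : 0 ≤ p) (hs : 0 < s) (hst : s < t) :
    p / 2 * ((t - s) * min (s ^ (p - 1)) ((t - s) ^ (p - 1))) ≤ t ^ p - s ^ p := by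
  obtain ⟨c, ⟨hsc, hct⟩, hc⟩ := exists_rpow_sub_rpow_eq_mul p hs hst
  have half_min : 1 / 2 * min (s ^ (p - 1)) ((t - s) ^ (p - 1)) ≤ c ^ (p - 1) :=
    half_mul_min_rpow_rpow_le_rpow hs hsc.le (by linarith) (by linarith)
  calc p / 2 * ((t - s) * min (s ^ (p - 1)) ((t - s) ^ (p - 1)))
      = p * (1 / 2 * min (s ^ (p - 1)) ((t - s) ^ (p - 1))) * (t - s) := by ring
    _ ≤ p * c ^ (p - 1) * (t - s) :=
      mul_le_mul_of_nonneg_right (mul_le_mul_of_nonneg_left half_min hp) (sub_pos.2 hst).le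
    _ = t ^ p - s ^ p := hc.symm

/-- sharp Hölder-type lower bound for differences of powers. -/
theorem rpow_diff_lower (α : ℝ) (hα : 0 < α) (hα2 : α < 2) (s t : ℝ) (hs : 0 < s)
    (hst : s < t) :
    α / 8 * ((t - s) * min (s ^ (α / 2 - 1)) ((t - s) ^ (α / 2 - 1))) ≤
      t ^ (α / 2) - s ^ (α / 2) := by
  have : 0 < t - s := sub_pos.2 hst
  have hα8 : α / 8 ≤ α / 2 / 2 := by linarith
  calc α / 8 * ((t - s) * min (s ^ (α / 2 - 1)) ((t - s) ^ (α / 2 - 1)))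
      ≤ α / 2 / 2 * ((t - s) * min (s ^ (α / 2 - 1)) ((t - s) ^ (α / 2 - 1))) := by gcongr
    _ ≤ t ^ (α / 2) - s ^ (α / 2) := rpow_diff_lower_general (half_pos hα).le hs hst
end

section
/- There exists a constant c > 0, depending only on α, such that for all ε ∈ (0,1/20), t ∈ (0,1) and a ∈ [0,1/2] the following holds. Set r = (1+t²)/(2t) and ρ = √(r²-a²) - (1-t²)/(2t). If ρ < ε, then (ε²-ρ²)^{α/2} - (ε²-t²)₊^{α/2} ≤ c·ε^α·a^α. -/
open MeasureTheory Metric Real Set Filter RealInnerProductSpace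
open scoped ENNReal

/-! The distance `ρ` from a point of the arc to the axis is, for fixed `t`, a concave function of
the square of its height `a`, equal to `t` at `a = 0` and nonnegative at `|a| = 1`; hence
`ρ ≥ t (1 - a²)`. With `m = min ε t` this gives `ρ ≥ m (1 - a²)`, so that
`ε² - ρ² ≤ (ε² - m²) + 2 m² a² ≤ (ε² - t²)₊ + 2 ε² a²`, and `x ↦ x ^ (α / 2)` is subadditive. -/

/-- The number `ρ`: the distance to the axis spanned by `e_d` of the point at height `a` on the
circular arc from `e_d` to `-e_d` that meets the hyperplane `z_d = 0` at distance `t` from the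
origin. Its circle has radius `(1 + t²) / (2t)` and center at signed distance `-(1 - t²) / (2t)`
from the axis. -/
noncomputable def axisDist (t a : ℝ) : ℝ :=
  √(((1 + t ^ 2) / (2 * t)) ^ 2 - a ^ 2) - (1 - t ^ 2) / (2 * t)

lemma mul_one_sub_sq_le_axisDist {t a : ℝ} (ht : 0 < t) (ha : |a| ≤ 1) :
    t * (1 - a ^ 2) ≤ axisDist t a := by
  have ha2 : a ^ 2 ≤ 1 := (sq_le_one_iff_abs_le_one a).2 ha
  have h_sqrt : (1 + t ^ 2) / (2 * t) - t * a ^ 2 ≤ √(((1 + t ^ 2) / (2 * t)) ^ 2 - a ^ 2) := by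
    apply Real.le_sqrt_of_sq_le
    have h_expand : ((1 + t ^ 2) / (2 * t) - t * a ^ 2) ^ 2 =
        ((1 + t ^ 2) / (2 * t)) ^ 2 - a ^ 2 - t ^ 2 * (a ^ 2 * (1 - a ^ 2)) := by
      field_simp
      ring
    have h_nonneg : 0 ≤ t ^ 2 * (a ^ 2 * (1 - a ^ 2)) := by
      have := sub_nonneg.2 ha2
      positivity
    linarith
  have h_center : (1 + t ^ 2) / (2 * t) - (1 - t ^ 2) / (2 * t) = t := by
    field_simp
    ring
  unfold axisDist
  linarith

lemma axisDist_nonneg {t a : ℝ} (ht : 0 < t) (ha : |a| ≤ 1) : 0 ≤ axisDist t a :=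
  (mul_nonneg ht.le (sub_nonneg.2 ((sq_le_one_iff_abs_le_one a).2 ha))).trans
    (mul_one_sub_sq_le_axisDist ht ha)

lemma sq_sub_sq_le_max_add_of_mul_one_sub_sq_le {ε t a ρ : ℝ} (hε : 0 ≤ ε) (ht : 0 ≤ t)
    (ha : |a| ≤ 1) (hρ : t * (1 - a ^ 2) ≤ ρ) :
    ε ^ 2 - ρ ^ 2 ≤ max (ε ^ 2 - t ^ 2) 0 + 2 * ε ^ 2 * a ^ 2 := by
  have ha2 : 0 ≤ 1 - a ^ 2 := sub_nonneg.2 ((sq_le_one_iff_abs_le_one a).2 ha)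
  obtain ⟨m, hm, hmε, hmt, hm_max⟩ :
      ∃ m, 0 ≤ m ∧ m ≤ ε ∧ m ≤ t ∧ ε ^ 2 - m ^ 2 ≤ max (ε ^ 2 - t ^ 2) 0 := by
    rcases le_total ε t with h | h
    · exact ⟨ε, hε, le_rfl, h, by simp only [sub_self, le_max_right]⟩
    · exact ⟨t, ht, h, le_rfl, le_max_left _ _⟩
  have hmρ : (m * (1 - a ^ 2)) ^ 2 ≤ ρ ^ 2 :=
    pow_le_pow_left₀ (mul_nonneg hm ha2) ((mul_le_mul_of_nonneg_right hmt ha2).trans hρ) 2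
  calc ε ^ 2 - ρ ^ 2
      ≤ ε ^ 2 - (m * (1 - a ^ 2)) ^ 2 := sub_le_sub_left hmρ _
    _ = (ε ^ 2 - m ^ 2) + 2 * m ^ 2 * a ^ 2 - (m * a ^ 2) ^ 2 := by ring
    _ ≤ (ε ^ 2 - m ^ 2) + 2 * m ^ 2 * a ^ 2 := sub_le_self _ (sq_nonneg _)
    _ ≤ max (ε ^ 2 - t ^ 2) 0 + 2 * ε ^ 2 * a ^ 2 := by gcongr

lemma rpow_sub_rpow_le_rpow_of_le_add {x y z p : ℝ} (hx : 0 ≤ x) (hy : 0 ≤ y) (hz : 0 ≤ z)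
    (hp : 0 ≤ p) (hp1 : p ≤ 1) (h : x ≤ y + z) : x ^ p - y ^ p ≤ z ^ p :=
  sub_le_iff_le_add'.2 <|
    (Real.rpow_le_rpow hx h hp).trans (Real.rpow_add_le_add_rpow hy hz hp hp1)

theorem sExit_sub_sStar_scalar_general {α ε t a : ℝ} (hα : 0 ≤ α) (hα2 : α ≤ 2) (ht : 0 < t)
    (ha : |a| ≤ 1) (hρ : axisDist t a ≤ ε) :
    (ε ^ 2 - axisDist t a ^ 2) ^ (α / 2) - (max (ε ^ 2 - t ^ 2) 0) ^ (α / 2) ≤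
      2 ^ (α / 2) * ε ^ α * |a| ^ α := by
  have hρ0 : 0 ≤ axisDist t a := axisDist_nonneg ht ha
  have hε : 0 ≤ ε := hρ0.trans hρ
  calc (ε ^ 2 - axisDist t a ^ 2) ^ (α / 2) - (max (ε ^ 2 - t ^ 2) 0) ^ (α / 2)
      ≤ (2 * ε ^ 2 * a ^ 2) ^ (α / 2) :=
        rpow_sub_rpow_le_rpow_of_le_add (sub_nonneg.2 (pow_le_pow_left₀ hρ0 hρ 2))
          (le_max_right _ _) (by positivity) (by linarith) (by linarith)
          (sq_sub_sq_le_max_add_of_mul_one_sub_sq_le hε ht.le ha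
            (mul_one_sub_sq_le_axisDist ht ha))
    _ = 2 ^ (α / 2) * ε ^ α * |a| ^ α := by
        rw [Real.mul_rpow (by positivity) (sq_nonneg a), Real.mul_rpow zero_le_two (sq_nonneg ε),
          Real.rpow_div_two_eq_sqrt α (sq_nonneg a), Real.rpow_div_two_eq_sqrt α (sq_nonneg ε),
          Real.sqrt_sq hε, Real.sqrt_sq_eq_abs]

/-- bound for the difference `s_ε(z) - s*_ε(z)` expressed in scalar form,
with `ρ = √(r²-a²) - (1-t²)/(2t)`, `r = (1+t²)/(2t)`. -/
theorem sExit_sub_sStar_scalar (α : ℝ) (hα : 0 < α) (hα2 : α < 2) :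
    ∃ c : ℝ, 0 < c ∧ ∀ ε ∈ Set.Ioo (0 : ℝ) (1 / 20), ∀ t ∈ Set.Ioo (0 : ℝ) 1,
      ∀ a ∈ Set.Icc (0 : ℝ) (1 / 2),
        Real.sqrt (((1 + t ^ 2) / (2 * t)) ^ 2 - a ^ 2) - (1 - t ^ 2) / (2 * t) < ε →
        (ε ^ 2 - (Real.sqrt (((1 + t ^ 2) / (2 * t)) ^ 2 - a ^ 2) -
              (1 - t ^ 2) / (2 * t)) ^ 2) ^ (α / 2) -
            (max (ε ^ 2 - t ^ 2) 0) ^ (α / 2) ≤ c * ε ^ α * a ^ α := by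
  refine ⟨2 ^ (α / 2), by positivity, fun ε _ t ht a ha hρ ↦ ?_⟩
  simpa only [axisDist, abs_of_nonneg ha.1] using sExit_sub_sStar_scalar_general hα.le hα2.le ht.1
    ((abs_of_nonneg ha.1).trans_le (ha.2.trans one_half_lt_one.le)) hρ.le
end
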